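/- Let p and q be open guarded FNM terms with at most one free variable x. Let A and B be process constants defined by A ≐ p{A/x} and B ≐ q{B/x}. If p ~sp q (as open terms, i.e., p{r/x} ~sp q{r/x} for every closed FNM term r), then A ~sp B. (Structure-preserving bisimilarity is a congruence for guarded recursion.) -/

import Mathlib

/-- Actions of FNM: the invisible action τ, input actions `a ∈ L` and
output actions `ā ∈ L̄` (here `α` plays the role of the finite set `L`). -/
inductive Act (α : Type) where
  | tau : Act α
  | inp : α → Act α
  | out : α → Act α
  deriving DecidableEq

/-- (Open) FNM terms: `0`, the variable `x`, action prefixing `mu.t`, strong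
prefixing `a̲.s`, choice `s+s`, constants `C`, parallel `t|t` and
restriction `(νa)p`.  The syntactic categories are carved out below. -/
inductive FNM (α κ : Type) where
  | nil : FNM α κ
  | var : FNM α κ
  | pref : Act α → FNM α κ → FNM α κ
  | spref : α → FNM α κ → FNM α κ
  | sum : FNM α κ → FNM α κ → FNM α κ
  | const : κ → FNM α κ
  | par : FNM α κ → FNM α κ → FNM α κ
  | res : α → FNM α κ → FNM α κ
  deriving DecidableEq

namespace FNM

variable {α κ : Type}

mutual
  /-- Guarded terms: syntactic category `s ::= 0 | mu.t | a̲.s | s+s`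
  (with `t` restriction-free). -/
  def Grd : FNM α κ → Prop
    | .nil => True
    | .var => False
    | .pref _ t => RF t
    | .spref _ s => Grd s
    | .sum s1 s2 => Grd s1 ∧ Grd s2
    | .const _ => False
    | .par _ _ => False
    | .res _ _ => False
  /-- Restriction-free terms: syntactic category `t ::= q | t|t`, where
  `q ::= s | C | x` is the category of sequential terms. -/
  def RF : FNM α κ → Prop
    | .nil => True
    | .var => True
    | .pref _ t => RF t
    | .spref _ s => Grd s
    | .sum s1 s2 => Grd s1 ∧ Grd s2
    | .const _ => True
    | .par t1 t2 => RF t1 ∧ RF t2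
    | .res _ _ => False
end

/-- Sequential terms: `q ::= s | C | x`. -/
def Seq (t : FNM α κ) : Prop :=
  Grd t ∨ (∃ c, t = FNM.const c) ∨ t = FNM.var

/-- General terms: `p ::= t | (νa)p`. -/
def Gen : FNM α κ → Prop
  | .res _ p => Gen p
  | t => RF t

/-- Closed terms: no occurrence of the variable. -/
def VarFree : FNM α κ → Prop
  | .nil => True
  | .var => False
  | .pref _ t => VarFree t
  | .spref _ s => VarFree s
  | .sum s1 s2 => VarFree s1 ∧ VarFree s2
  | .const _ => True
  | .par t1 t2 => VarFree t1 ∧ VarFree t2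
  | .res _ p => VarFree p

/-- Substitution `p{r/x}` of the term `r` for every occurrence of the
variable `x` in `p` (constants are dealt with via the environment). -/
def subst (r : FNM α κ) : FNM α κ → FNM α κ
  | .nil => .nil
  | .var => r
  | .pref mu t => .pref mu (subst r t)
  | .spref a s => .spref a (subst r s)
  | .sum s1 s2 => .sum (subst r s1) (subst r s2)
  | .const c => .const c
  | .par t1 t2 => .par (subst r t1) (subst r t2)
  | .res a p => .res a (subst r p)

/-- `mu` uses the name `a`. -/
def _root_.Act.uses (a : α) : Act α → Prop
  | .tau => False
  | .inp b => b = a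
  | .out b => b = a

/-- `a` occurs free in a term (through an environment `env` giving the body
of each process constant). -/
inductive FreeIn (env : κ → FNM α κ) (a : α) : FNM α κ → Prop where
  | pref_act {mu : Act α} {t : FNM α κ} : mu.uses a → FreeIn env a (.pref mu t)
  | pref_cont {mu : Act α} {t : FNM α κ} : FreeIn env a t → FreeIn env a (.pref mu t)
  | spref_act {s : FNM α κ} : FreeIn env a (.spref a s)
  | spref_cont {b : α} {s : FNM α κ} : FreeIn env a s → FreeIn env a (.spref b s)
  | sum_l {s1 s2 : FNM α κ} : FreeIn env a s1 → FreeIn env a (.sum s1 s2)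
  | sum_r {s1 s2 : FNM α κ} : FreeIn env a s2 → FreeIn env a (.sum s1 s2)
  | par_l {t1 t2 : FNM α κ} : FreeIn env a t1 → FreeIn env a (.par t1 t2)
  | par_r {t1 t2 : FNM α κ} : FreeIn env a t2 → FreeIn env a (.par t1 t2)
  | res {b : α} {p : FNM α κ} : a ≠ b → FreeIn env a p → FreeIn env a (.res b p)
  | const {c : κ} : FreeIn env a (env c) → FreeIn env a (.const c)

/-- `a` occurs bound (by a restriction) in a term. -/
inductive BoundIn (env : κ → FNM α κ) (a : α) : FNM α κ → Prop where
  | res_here {p : FNM α κ} : BoundIn env a (.res a p)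
  | res_in {b : α} {p : FNM α κ} : BoundIn env a p → BoundIn env a (.res b p)
  | pref {mu : Act α} {t : FNM α κ} : BoundIn env a t → BoundIn env a (.pref mu t)
  | spref {b : α} {s : FNM α κ} : BoundIn env a s → BoundIn env a (.spref b s)
  | sum_l {s1 s2 : FNM α κ} : BoundIn env a s1 → BoundIn env a (.sum s1 s2)
  | sum_r {s1 s2 : FNM α κ} : BoundIn env a s2 → BoundIn env a (.sum s1 s2)
  | par_l {t1 t2 : FNM α κ} : BoundIn env a t1 → BoundIn env a (.par t1 t2)
  | par_r {t1 t2 : FNM α κ} : BoundIn env a t2 → BoundIn env a (.par t1 t2)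
  | const {c : κ} : BoundIn env a (env c) → BoundIn env a (.const c)

end FNM

/-- A place of the net `N_FNM`: a sequential (extended) term, rendered as a
pure sequential term together with the record `ρ : α → Bool` of which names
have been replaced by their restricted counterparts (`ρ a = true` represents
the substitution `{a'/a}`). -/
abbrev Place (α κ : Type) := FNM α κ × (α → Bool)

namespace FNM

variable {α κ : Type} [DecidableEq α] [DecidableEq κ] [Fintype α]

/-- The decomposition function `dec`, mapping (extended) terms to markings:
`dec(0) = θ`, `dec(p|q) = dec(p) ⊕ dec(q)`, `dec((νa)p) = dec(p){a'/a}`, and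
a sequential term other than `0` is mapped to a single place. -/
def dec (ρ : α → Bool) : FNM α κ → Multiset (Place α κ)
  | .nil => 0
  | .par t1 t2 => dec ρ t1 + dec ρ t2
  | .res a p => dec (Function.update ρ a true) p
  | t => {(t, ρ)}

end FNM

/-- Extended visible actions: inputs and outputs, possibly restricted
(`inp a true` represents `a'`, `out a false` represents `ā`, etc.). -/
inductive XAct (α : Type) where
  | inp : α → Bool → XAct α
  | out : α → Bool → XAct α

/-- Labels of net transitions: `τ` is the empty sequence, and otherwise a
sequence of extended actions. -/
abbrev Lbl (α : Type) := List (XAct α)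

/-- An extended action carries no restricted name. -/
def XAct.unres {α : Type} : XAct α → Prop
  | .inp _ r => r = false
  | .out _ r => r = false

/-- The label contributed by prefix `mu` under the restriction record `ρ`. -/
def actL {α : Type} (ρ : α → Bool) : Act α → Lbl α
  | .tau => []
  | .inp a => [XAct.inp a (ρ a)]
  | .out a => [XAct.out a (ρ a)]

/-- The synchronization relation `Sync(σ1, σ2, σ)`: `Sync(α, ᾱ, τ)`,
`Sync(aσ, ā, σ)` and `Sync(ā, aσ, σ)` for `σ ≠ ε` (also on restricted
actions). -/
inductive Sync {α : Type} : Lbl α → Lbl α → Lbl α → Prop where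
  | inout (a : α) (r : Bool) : Sync [XAct.inp a r] [XAct.out a r] []
  | outin (a : α) (r : Bool) : Sync [XAct.out a r] [XAct.inp a r] []
  | seqL (a : α) (r : Bool) (σ : Lbl α) :
      σ ≠ [] → Sync (XAct.inp a r :: σ) [XAct.out a r] σ
  | seqR (a : α) (r : Bool) (σ : Lbl α) :
      σ ≠ [] → Sync [XAct.out a r] (XAct.inp a r :: σ) σ

namespace FNM

variable {α κ : Type} [DecidableEq α] [DecidableEq κ] [Fintype α]

/-- A marking is admissible if for no name `a` both `a` and its restricted
counterpart `a'` occur free in it. -/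
def Adm (env : κ → FNM α κ) (m : Multiset (Place α κ)) : Prop :=
  ∀ a : α, ¬ ((∃ p ∈ m, FreeIn env a p.1 ∧ p.2 a = false) ∧
              (∃ p ∈ m, FreeIn env a p.1 ∧ p.2 a = true))

/-- The net transitions of `N_FNM`, generated by the rules (pref), (sum₁),
(sum₂), (cons), (s-pref) and (s-com). -/
inductive Tr (env : κ → FNM α κ) :
    Multiset (Place α κ) → Lbl α → Multiset (Place α κ) → Prop where
  | pref (ρ : α → Bool) (mu : Act α) (t : FNM α κ) :
      Tr env {(FNM.pref mu t, ρ)} (actL ρ mu) (dec ρ t)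
  | sum1 (ρ : α → Bool) (s1 s2 : FNM α κ) (σ : Lbl α) (m : Multiset (Place α κ)) :
      Tr env (dec ρ s1) σ m → Tr env {(FNM.sum s1 s2, ρ)} σ m
  | sum2 (ρ : α → Bool) (s1 s2 : FNM α κ) (σ : Lbl α) (m : Multiset (Place α κ)) :
      Tr env (dec ρ s2) σ m → Tr env {(FNM.sum s1 s2, ρ)} σ m
  | cons (ρ : α → Bool) (c : κ) (σ : Lbl α) (m : Multiset (Place α κ)) :
      Tr env (dec ρ (env c)) σ m → Tr env {(FNM.const c, ρ)} σ m
  | spref (ρ : α → Bool) (a : α) (s : FNM α κ) (σ : Lbl α) (m : Multiset (Place α κ)) :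
      Tr env (dec ρ s) σ m →
      Tr env {(FNM.spref a s, ρ)} (XAct.inp a (ρ a) :: σ) m
  | scom (m1 m2 m1' m2' : Multiset (Place α κ)) (σ1 σ2 σ : Lbl α) :
      Tr env m1 σ1 m1' → Tr env m2 σ2 m2' →
      Adm env (m1 + m2) → Sync σ1 σ2 σ →
      Tr env (m1 + m2) σ (m1' + m2')

/-- Tritions of the net `N_FNM`: only those whose label contains no
restricted action are kept. -/
def NetTr (env : κ → FNM α κ) (m : Multiset (Place α κ)) (σ : Lbl α)
    (m' : Multiset (Place α κ)) : Prop :=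
  Tr env m σ m' ∧ ∀ x ∈ σ, x.unres

/-- First projection of a linking. -/
def pi1 (l : Multiset (Place α κ × Place α κ)) : Multiset (Place α κ) :=
  l.map Prod.fst

/-- Second projection of a linking. -/
def pi2 (l : Multiset (Place α κ × Place α κ)) : Multiset (Place α κ) :=
  l.map Prod.snd

/-- Structure-preserving bisimulation on the net `N_FNM`. -/
def IsSPB (env : κ → FNM α κ) (R : Set (Multiset (Place α κ × Place α κ))) : Prop :=
  ∀ l ∈ R, ∀ c ≤ l,
    (∀ σ m1, NetTr env (pi1 c) σ m1 →
      ∃ m2 cb, NetTr env (pi2 c) σ m2 ∧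
        pi1 cb = m1 ∧ pi2 cb = m2 ∧ l - c + cb ∈ R) ∧
    (∀ σ m2, NetTr env (pi2 c) σ m2 →
      ∃ m1 cb, NetTr env (pi1 c) σ m1 ∧
        pi1 cb = m1 ∧ pi2 cb = m2 ∧ l - c + cb ∈ R)

/-- `p ~sp q`: some structure-preserving bisimulation contains a linking
projecting on `dec(p)` and `dec(q)`. -/
def SPEq (env : κ → FNM α κ) (p q : FNM α κ) : Prop :=
  ∃ R, IsSPB env R ∧ ∃ l ∈ R,
    pi1 l = dec (fun _ => false) p ∧ pi2 l = dec (fun _ => false) q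

end FNM

/-!
Since `p` is guarded, a first step of `p{r/x}` never touches `r`: it is a step of `p{r'/x}` for
every `r'`, and leads to `t{r/x}`, respectively `t{r'/x}`, for one and the same `t`. Hence an
equation `X ≐ p{X/x}` has at most one solution up to bisimilarity. Indeed, if `A ≐ p{A/x}` and `B`
is bisimilar to `p{B/x}`, then the pairs `(t{A/x}, t{B/x})`, composed with bisimilarity, form a
bisimulation. The solution `B ≐ q{B/x}` qualifies because `p{B/x} ~sp q{B/x}`.

Working with single places instead of linkings is possible because a marking of restriction-free
terms is always admissible, so that the transitions of a marking are determined by those of its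
places.
-/

section Labels

variable {α : Type} {σ σ₁ σ₂ : Lbl α}

theorem unres_of_mem_actL {mu : Act α} {a : XAct α} (ha : a ∈ actL (fun _ => false) mu) :
    a.unres := by
  cases mu <;> simp_all [actL, XAct.unres]

theorem Sync.unres (h : Sync σ₁ σ₂ σ) (h₁ : ∀ a ∈ σ₁, a.unres) (h₂ : ∀ a ∈ σ₂, a.unres) :
    ∀ a ∈ σ, a.unres := by
  cases h with
  | inout | outin => simp
  | seqL => exact fun a ha => h₁ a (List.mem_cons_of_mem _ ha)
  | seqR => exact fun a ha => h₂ a (List.mem_cons_of_mem _ ha)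

end Labels

namespace FNM

section Multiset

variable {β γ δ : Type*} {r : β → γ → Prop} {s : γ → δ → Prop}

theorem rel_comp {a : Multiset β} {b : Multiset γ} {c : Multiset δ}
    (hab : Multiset.Rel r a b) (hbc : Multiset.Rel s b c) :
    Multiset.Rel (Relation.Comp r s) a c := by
  induction hab generalizing c with
  | zero =>
    rw [Multiset.rel_zero_left.1 hbc]
    exact .zero
  | cons hxy _ ih =>
    obtain ⟨z, c', hyz, hc, rfl⟩ := Multiset.rel_cons_left.1 hbc
    exact .cons ⟨_, hxy, hyz⟩ (ih hc)

theorem rel_singleton {x : β} {b : Multiset γ} :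
    Multiset.Rel r {x} b ↔ ∃ y, r x y ∧ b = {y} := by
  simp [← Multiset.cons_zero, Multiset.rel_cons_left, Multiset.rel_zero_left]

theorem rel_iff_exists_map_fst_map_snd {a : Multiset β} {b : Multiset γ} :
    Multiset.Rel r a b ↔
      ∃ l : Multiset (β × γ), l.map Prod.fst = a ∧ l.map Prod.snd = b ∧ ∀ x ∈ l, r x.1 x.2 := by
  constructor
  · intro h
    induction h with
    | zero => exact ⟨0, by simp⟩
    | @cons x y _ _ hxy _ ih =>
      obtain ⟨l, rfl, rfl, hl⟩ := ih
      exact ⟨(x, y) ::ₘ l, by simp, by simp, Multiset.forall_mem_cons.2 ⟨hxy, hl⟩⟩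
  · rintro ⟨l, rfl, rfl, hl⟩
    exact Multiset.rel_map.2 (Multiset.rel_refl_of_refl_on hl)

theorem add_ne_singleton {a b : Multiset β} (ha : a ≠ 0) (hb : b ≠ 0) (x : β) :
    a + b ≠ {x} := by
  intro h
  have hcard := congrArg Multiset.card h
  rw [Multiset.card_add, Multiset.card_singleton] at hcard
  have := Multiset.card_pos.2 ha
  have := Multiset.card_pos.2 hb
  lia

end Multiset

section Terms

variable {α κ : Type} {t : FNM α κ}

theorem Grd.rf (h : Grd t) : RF t := by
  cases t <;> simp_all [Grd, RF]

theorem rf_const (c : κ) : RF (const c : FNM α κ) := by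
  simp [RF]

theorem grd_and_rf_subst_const (c : κ) (t : FNM α κ) :
    (Grd t → Grd (subst (const c) t)) ∧ (RF t → RF (subst (const c) t)) := by
  induction t <;> simp_all [Grd, RF, subst]

theorem Grd.subst_const (h : Grd t) (c : κ) : Grd (subst (const c) t) :=
  (grd_and_rf_subst_const c t).1 h

end Terms

variable {α κ : Type} {env : κ → FNM α κ} {ρ : α → Bool} {σ : Lbl α} {m n : Multiset (Place α κ)}

section Transitions

variable [DecidableEq α]

theorem Tr.source_ne_zero (h : Tr env m σ n) : m ≠ 0 := by
  induction h with
  | scom m₁ m₂ _ _ _ _ _ _ _ _ _ ih₁ _ => exact fun h => ih₁ (add_eq_zero.1 h).1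
  | _ => exact Multiset.singleton_ne_zero _

theorem not_tr_zero : ¬ Tr env 0 σ n :=
  fun h => h.source_ne_zero rfl

theorem tr_singleton_iff {t : FNM α κ} :
    Tr env {(t, ρ)} σ n ↔
      match t with
      | .pref mu t => σ = actL ρ mu ∧ n = dec ρ t
      | .spref a s => ∃ τ, σ = XAct.inp a (ρ a) :: τ ∧ Tr env (dec ρ s) τ n
      | .sum s₁ s₂ => Tr env (dec ρ s₁) σ n ∨ Tr env (dec ρ s₂) σ n
      | .const c => Tr env (dec ρ (env c)) σ n
      | _ => False := by
  constructor
  · intro h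
    generalize hm : ({(t, ρ)} : Multiset (Place α κ)) = m at h
    cases h with
    | scom _ _ _ _ _ _ _ h₁ h₂ =>
      exact absurd hm.symm (add_ne_singleton h₁.source_ne_zero h₂.source_ne_zero _)
    | _ => obtain ⟨rfl, rfl⟩ := Prod.mk.inj (Multiset.singleton_inj.1 hm); simp_all
  · cases t with
    | pref mu t => rintro ⟨rfl, rfl⟩; exact .pref ..
    | spref a s => rintro ⟨τ, rfl, h⟩; exact .spref _ _ _ _ _ h
    | sum s₁ s₂ => exact fun h => h.elim (.sum1 _ _ _ _ _) (.sum2 _ _ _ _ _)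
    | const c => exact .cons _ _ _ _
    | _ => exact False.elim

theorem tr_const_iff {c : κ} : Tr env {(const c, ρ)} σ n ↔ Tr env (dec ρ (env c)) σ n :=
  tr_singleton_iff

theorem Grd.tr_dec_iff {s : FNM α κ} (hs : Grd s) :
    Tr env (dec ρ s) σ n ↔ Tr env {(s, ρ)} σ n := by
  cases s with
  | nil => exact iff_of_false not_tr_zero tr_singleton_iff.1
  | pref | spref | sum => exact Iff.rfl
  | var | const | par | res => exact hs.elim

theorem Grd.exists_tr_dec_subst {r s : FNM α κ} (hs : Grd s)
    (h : Tr env (dec ρ (subst r s)) σ n) :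
    ∃ t, RF t ∧ n = dec ρ (subst r t) ∧
      ∀ r', Tr env (dec ρ (subst r' s)) σ (dec ρ (subst r' t)) := by
  induction s generalizing σ with
  | nil => exact (not_tr_zero h).elim
  | pref mu t =>
    obtain ⟨rfl, rfl⟩ := tr_singleton_iff.1 h
    exact ⟨t, hs, rfl, fun _ => .pref ..⟩
  | spref a s ih =>
    obtain ⟨τ, rfl, h'⟩ := tr_singleton_iff.1 h
    obtain ⟨t, ht, rfl, htr⟩ := ih hs h'
    exact ⟨t, ht, rfl, fun r' => .spref _ _ _ _ _ (htr r')⟩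
  | sum s₁ s₂ ih₁ ih₂ =>
    rcases tr_singleton_iff.1 h with h' | h'
    · obtain ⟨t, ht, rfl, htr⟩ := ih₁ hs.1 h'
      exact ⟨t, ht, rfl, fun r' => .sum1 _ _ _ _ _ (htr r')⟩
    · obtain ⟨t, ht, rfl, htr⟩ := ih₂ hs.2 h'
      exact ⟨t, ht, rfl, fun r' => .sum2 _ _ _ _ _ (htr r')⟩
  | var | const | par | res => exact hs.elim

end Transitions

section Unrestricted

/-- The empty restriction record, under which no name is replaced by its restricted
counterpart. -/
abbrev noRes : α → Bool := fun _ => false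

/-- Markings of restriction-free terms under the empty restriction record. They are all
admissible and stay so along transitions, hence the admissibility condition of (s-com) and the
condition on labels in `NetTr` are void for them. -/
def Unrestricted (m : Multiset (Place α κ)) : Prop :=
  ∀ x ∈ m, RF x.1 ∧ x.2 = noRes

theorem unrestricted_singleton_iff {x : Place α κ} :
    Unrestricted {x} ↔ RF x.1 ∧ x.2 = noRes := by
  simp [Unrestricted]

theorem Unrestricted.mono (hn : Unrestricted n) (h : m ≤ n) : Unrestricted m :=
  fun x hx => hn x (Multiset.mem_of_le h hx)

theorem unrestricted_add_iff : Unrestricted (m + n) ↔ Unrestricted m ∧ Unrestricted n :=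
  ⟨fun h => ⟨h.mono (Multiset.le_add_right m n), h.mono (Multiset.le_add_left n m)⟩,
    fun h x hx => (Multiset.mem_add.1 hx).elim (h.1 x) (h.2 x)⟩

theorem Unrestricted.singleton_of_mem {x : Place α κ} (hm : Unrestricted m) (hx : x ∈ m) :
    Unrestricted {x} :=
  hm.mono (Multiset.singleton_le.2 hx)

theorem Unrestricted.adm (h : Unrestricted m) : Adm env m := by
  rintro a ⟨_, x, hx, _, hxa⟩
  simp [(h x hx).2] at hxa

variable [DecidableEq α]

theorem RF.unrestricted_dec {t : FNM α κ} (h : RF t) : Unrestricted (dec noRes t) := by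
  induction t with
  | nil => simp [Unrestricted, dec]
  | par t₁ t₂ ih₁ ih₂ => exact unrestricted_add_iff.2 ⟨ih₁ h.1, ih₂ h.2⟩
  | res => exact h.elim
  | _ => exact unrestricted_singleton_iff.2 ⟨h, rfl⟩

theorem Tr.unrestricted (henv : ∀ c, RF (env c)) (h : Tr env m σ n) (hm : Unrestricted m) :
    Unrestricted n ∧ ∀ a ∈ σ, a.unres := by
  induction h with
  | scom m₁ m₂ _ _ _ _ _ _ _ _ hsync ih₁ ih₂ =>
    obtain ⟨hm₁, hm₂⟩ := unrestricted_add_iff.1 hm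
    obtain ⟨hn₁, hσ₁⟩ := ih₁ hm₁
    obtain ⟨hn₂, hσ₂⟩ := ih₂ hm₂
    exact ⟨unrestricted_add_iff.2 ⟨hn₁, hn₂⟩, hsync.unres hσ₁ hσ₂⟩
  | pref ρ mu t =>
    obtain ⟨ht, rfl : ρ = noRes⟩ := unrestricted_singleton_iff.1 hm
    exact ⟨RF.unrestricted_dec ht, fun _ => unres_of_mem_actL⟩
  | sum1 ρ s₁ s₂ _ _ _ ih =>
    obtain ⟨hs, rfl : ρ = noRes⟩ := unrestricted_singleton_iff.1 hm
    exact ih (Grd.rf hs.1).unrestricted_dec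
  | sum2 ρ s₁ s₂ _ _ _ ih =>
    obtain ⟨hs, rfl : ρ = noRes⟩ := unrestricted_singleton_iff.1 hm
    exact ih (Grd.rf hs.2).unrestricted_dec
  | cons ρ c _ _ _ ih =>
    obtain ⟨-, rfl : ρ = noRes⟩ := unrestricted_singleton_iff.1 hm
    exact ih (henv c).unrestricted_dec
  | spref ρ a s _ _ _ ih =>
    obtain ⟨hs, rfl : ρ = noRes⟩ := unrestricted_singleton_iff.1 hm
    obtain ⟨hn, hσ⟩ := ih (Grd.rf hs).unrestricted_dec
    exact ⟨hn, List.forall_mem_cons.2 ⟨rfl, hσ⟩⟩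

end Unrestricted

section PlaceBisimilarity

variable [DecidableEq α] {E E' F F' : Place α κ → Place α κ → Prop} {x y z : Place α κ}

/-- `E` progresses to `F` if of two places related by `E` the second matches each transition of
the first, with resulting markings that are related by `F` place by place. -/
def Progresses (env : κ → FNM α κ) (E F : Place α κ → Place α κ → Prop) : Prop :=
  ∀ ⦃x y⦄, E x y → ∀ ⦃σ m⦄, Tr env {x} σ m → ∃ n, Tr env {y} σ n ∧ Multiset.Rel F m n

theorem Progresses.mono (h : Progresses env E F) (hE : ∀ x y, E' x y → E x y)
    (hF : ∀ x y, F x y → F' x y) : Progresses env E' F' := by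
  intro x y hxy σ m hm
  obtain ⟨n, hn, hmn⟩ := h (hE x y hxy) hm
  exact ⟨n, hn, hmn.mono fun a _ b _ => hF a b⟩

theorem Progresses.comp (h : Progresses env E F) (h' : Progresses env E' F') :
    Progresses env (Relation.Comp E E') (Relation.Comp F F') := by
  rintro x z ⟨y, hxy, hyz⟩ σ m hm
  obtain ⟨n, hn, hmn⟩ := h hxy hm
  obtain ⟨k, hk, hnk⟩ := h' hyz hn
  exact ⟨k, hk, rel_comp hmn hnk⟩

theorem Progresses.exists_tr (hE : Progresses env E F) {m' : Multiset (Place α κ)}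
    (h : Tr env m σ m') (hmn : Multiset.Rel E m n) (hn : Unrestricted n) :
    ∃ n', Tr env n σ n' ∧ Multiset.Rel F m' n' := by
  have single : ∀ {x σ m'}, Tr env {x} σ m' → ∀ {n}, Multiset.Rel E {x} n →
      ∃ n', Tr env n σ n' ∧ Multiset.Rel F m' n' := by
    intro x σ m' h n hxn
    obtain ⟨y, hxy, rfl⟩ := rel_singleton.1 hxn
    exact hE hxy h
  induction h generalizing n with
  | scom m₁ m₂ _ _ _ _ _ _ _ _ hsync ih₁ ih₂ =>
    obtain ⟨n₁, n₂, hmn₁, hmn₂, rfl⟩ := Multiset.rel_add_left.1 hmn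
    obtain ⟨hn₁, hn₂⟩ := unrestricted_add_iff.1 hn
    obtain ⟨n₁', h₁, hr₁⟩ := ih₁ hmn₁ hn₁
    obtain ⟨n₂', h₂, hr₂⟩ := ih₂ hmn₂ hn₂
    exact ⟨n₁' + n₂', .scom _ _ _ _ _ _ _ h₁ h₂ hn.adm hsync, hr₁.add hr₂⟩
  | pref => exact single (.pref ..) hmn
  | sum1 _ _ _ _ _ h => exact single (.sum1 _ _ _ _ _ h) hmn
  | sum2 _ _ _ _ _ h => exact single (.sum2 _ _ _ _ _ h) hmn
  | cons _ _ _ _ h => exact single (.cons _ _ _ _ h) hmn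
  | spref _ _ _ _ _ h => exact single (.spref _ _ _ _ _ h) hmn

/-- Place bisimulations: relations on places, rather than sets of linkings, that only look at
the transitions of single places. -/
structure IsPlaceBisim (env : κ → FNM α κ) (E : Place α κ → Place α κ → Prop) : Prop where
  forth : Progresses env E E
  back : Progresses env (flip E) (flip E)

/-- Place bisimilarity, the union of all place bisimulations. On restriction-free processes it
induces `SPEq`, see `speq_iff_rel_placeEq`. -/
def PlaceEq (env : κ → FNM α κ) (x y : Place α κ) : Prop :=
  ∃ E, IsPlaceBisim env E ∧ E x y

theorem isPlaceBisim_placeEq : IsPlaceBisim env (PlaceEq env) where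
  forth := fun _ _ ⟨E, hE, hxy⟩ => hE.forth.mono (E' := E) (fun _ _ => id)
    (fun _ _ h => ⟨E, hE, h⟩) hxy
  back := fun _ _ ⟨E, hE, hxy⟩ => hE.back.mono (E' := flip E) (fun _ _ => id)
    (fun _ _ h => ⟨E, hE, h⟩) hxy

theorem PlaceEq.refl (x : Place α κ) : PlaceEq env x x :=
  ⟨Eq, ⟨fun _ _ h _ m hm => ⟨m, h ▸ hm, Multiset.rel_eq_refl⟩,
    fun _ _ h _ m hm => ⟨m, h ▸ hm, Multiset.rel_flip_eq.2 rfl⟩⟩, rfl⟩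

theorem IsPlaceBisim.comp (hE : IsPlaceBisim env E) (hF : IsPlaceBisim env F) :
    IsPlaceBisim env (Relation.Comp E F) where
  forth := hE.forth.comp hF.forth
  back := by
    rw [Relation.flip_comp]
    exact hF.back.comp hE.back

theorem PlaceEq.trans : PlaceEq env x y → PlaceEq env y z → PlaceEq env x z :=
  fun ⟨E, hE, hxy⟩ ⟨F, hF, hyz⟩ => ⟨Relation.Comp E F, hE.comp hF, y, hxy, hyz⟩

end PlaceBisimilarity

section StructurePreserving

variable [DecidableEq α] [DecidableEq κ] [Fintype α]

theorem IsPlaceBisim.isSPB {E : Place α κ → Place α κ → Prop} (henv : ∀ c, RF (env c))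
    (hE : IsPlaceBisim env E) :
    IsSPB env {l | (∀ x ∈ l, E x.1 x.2) ∧ Unrestricted (pi1 l) ∧ Unrestricted (pi2 l)} := by
  rintro l ⟨hl, hl₁, hl₂⟩ c hc
  have hrel : Multiset.Rel E (pi1 c) (pi2 c) := rel_iff_exists_map_fst_map_snd.2
    ⟨c, rfl, rfl, fun x hx => hl x (Multiset.mem_of_le hc hx)⟩
  have hc₁ : Unrestricted (pi1 c) := hl₁.mono (Multiset.map_le_map hc)
  have hc₂ : Unrestricted (pi2 c) := hl₂.mono (Multiset.map_le_map hc)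
  have replace_linking : ∀ {σ m n}, Tr env (pi1 c) σ m → Tr env (pi2 c) σ n →
      Multiset.Rel E m n → ∃ cb, pi1 cb = m ∧ pi2 cb = n ∧
        (∀ x ∈ l - c + cb, E x.1 x.2) ∧
        Unrestricted (pi1 (l - c + cb)) ∧ Unrestricted (pi2 (l - c + cb)) := by
    intro σ m n hm hn hmn
    obtain ⟨cb, rfl, rfl, hcb⟩ := rel_iff_exists_map_fst_map_snd.1 hmn
    have hsub : l - c ≤ l := Multiset.sub_le_self l c
    refine ⟨cb, rfl, rfl, fun x hx => ?_, ?_, ?_⟩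
    · exact (Multiset.mem_add.1 hx).elim (fun h => hl x (Multiset.mem_of_le hsub h)) (hcb x)
    · rw [pi1, Multiset.map_add, unrestricted_add_iff]
      exact ⟨hl₁.mono (Multiset.map_le_map hsub), (hm.unrestricted henv hc₁).1⟩
    · rw [pi2, Multiset.map_add, unrestricted_add_iff]
      exact ⟨hl₂.mono (Multiset.map_le_map hsub), (hn.unrestricted henv hc₂).1⟩
  constructor
  · rintro σ m ⟨hm, hσ⟩
    obtain ⟨n, hn, hmn⟩ := hE.forth.exists_tr hm hrel hc₂
    obtain ⟨cb, hcb⟩ := replace_linking hm hn hmn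
    exact ⟨n, cb, ⟨hn, hσ⟩, hcb⟩
  · rintro σ n ⟨hn, hσ⟩
    obtain ⟨m, hm, hnm⟩ := hE.back.exists_tr hn (Multiset.rel_flip.2 hrel) hc₁
    obtain ⟨cb, hcb⟩ := replace_linking hm hn (Multiset.rel_flip.1 hnm)
    exact ⟨m, cb, ⟨hm, hσ⟩, hcb⟩

theorem IsSPB.isPlaceBisim {R : Set (Multiset (Place α κ × Place α κ))}
    (henv : ∀ c, RF (env c)) (hR : IsSPB env R) :
    IsPlaceBisim env fun x y =>
      Unrestricted {x} ∧ Unrestricted {y} ∧ ∃ l ∈ R, (x, y) ∈ l := by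
  have rel_of_mem : ∀ {x y : Place α κ} {σ l' cb}, Unrestricted {x} → Unrestricted {y} →
      Tr env {x} σ (pi1 cb) → Tr env {y} σ (pi2 cb) → l' + cb ∈ R →
      Multiset.Rel (fun x y => Unrestricted {x} ∧ Unrestricted {y} ∧ ∃ l ∈ R, (x, y) ∈ l)
        (pi1 cb) (pi2 cb) := by
    intro x y σ l' cb hx hy hm hn hcb
    refine rel_iff_exists_map_fst_map_snd.2 ⟨cb, rfl, rfl, fun z hz => ⟨?_, ?_, ?_⟩⟩
    · exact (hm.unrestricted henv hx).1.singleton_of_mem (Multiset.mem_map_of_mem _ hz)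
    · exact (hn.unrestricted henv hy).1.singleton_of_mem (Multiset.mem_map_of_mem _ hz)
    · exact ⟨_, hcb, Multiset.mem_add.2 (Or.inr hz)⟩
  constructor
  · rintro x y ⟨hx, hy, l, hl, hxy⟩ σ m hm
    obtain ⟨_, cb, ⟨hn, -⟩, rfl, rfl, hcb⟩ :=
      (hR l hl {(x, y)} (Multiset.singleton_le.2 hxy)).1 σ m ⟨hm, (hm.unrestricted henv hx).2⟩
    exact ⟨_, hn, rel_of_mem hx hy hm hn hcb⟩
  · rintro y x ⟨hx, hy, l, hl, hxy⟩ σ n hn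
    obtain ⟨_, cb, ⟨hm, -⟩, rfl, rfl, hcb⟩ :=
      (hR l hl {(x, y)} (Multiset.singleton_le.2 hxy)).2 σ n ⟨hn, (hn.unrestricted henv hy).2⟩
    exact ⟨_, hm, Multiset.rel_flip.2 (rel_of_mem hx hy hm hn hcb)⟩

theorem speq_iff_rel_placeEq (henv : ∀ c, RF (env c)) {p q : FNM α κ} (hp : RF p) (hq : RF q) :
    SPEq env p q ↔ Multiset.Rel (PlaceEq env) (dec noRes p) (dec noRes q) := by
  have hp' := hp.unrestricted_dec
  have hq' := hq.unrestricted_dec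
  constructor
  · rintro ⟨R, hR, l, hl, hl₁, hl₂⟩
    refine rel_iff_exists_map_fst_map_snd.2 ⟨l, hl₁, hl₂, fun x hx => ?_⟩
    rw [← hl₁] at hp'
    rw [← hl₂] at hq'
    exact ⟨_, hR.isPlaceBisim henv, hp'.singleton_of_mem (Multiset.mem_map_of_mem _ hx),
      hq'.singleton_of_mem (Multiset.mem_map_of_mem _ hx), l, hl, hx⟩
  · intro h
    obtain ⟨l, hl₁, hl₂, hl⟩ := rel_iff_exists_map_fst_map_snd.1 h
    rw [← hl₁] at hp'
    rw [← hl₂] at hq'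
    exact ⟨_, isPlaceBisim_placeEq.isSPB henv, l, ⟨hl, hp', hq'⟩, hl₁, hl₂⟩

end StructurePreserving

section Recursion

variable [DecidableEq α] {A B : κ} {p t : FNM α κ}

/-- Pairs of places that are the instances of a sequential term at the constants `A` and `B`.
The case of a constant is subsumed under `refl`, which also relates the markings that it reaches
to themselves: its body may contain the variable, but is not affected by `subst`. -/
inductive InstRel (A B : κ) : Place α κ → Place α κ → Prop where
  | refl (x : Place α κ) : InstRel A B x x
  | var : InstRel A B (const A, noRes) (const B, noRes)
  | grd {t : FNM α κ} (ht : Grd t) :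
      InstRel A B (subst (const A) t, noRes) (subst (const B) t, noRes)

theorem rel_instRel_dec_subst (ht : RF t) :
    Multiset.Rel (InstRel A B) (dec noRes (subst (const A) t))
      (dec noRes (subst (const B) t)) := by
  induction t with
  | nil => exact .zero
  | var => exact .cons .var .zero
  | const => exact .cons (.refl _) .zero
  | par t₁ t₂ ih₁ ih₂ => exact (ih₁ ht.1).add (ih₂ ht.2)
  | res => exact ht.elim
  | pref mu t => exact .cons (.grd (t := .pref mu t) ht) .zero
  | spref a s => exact .cons (.grd (t := .spref a s) ht) .zero
  | sum s₁ s₂ => exact .cons (.grd (t := .sum s₁ s₂) ht) .zero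

theorem rel_instRel_comp_placeEq_dec_subst (ht : RF t) :
    Multiset.Rel (Relation.Comp (InstRel A B) (PlaceEq env)) (dec noRes (subst (const A) t))
      (dec noRes (subst (const B) t)) :=
  (rel_instRel_dec_subst ht).mono fun _ _ y _ hxy => ⟨y, hxy, .refl y⟩

theorem rel_instRel_comp_placeEq_refl (m : Multiset (Place α κ)) :
    Multiset.Rel (Relation.Comp (InstRel A B) (PlaceEq env)) m m :=
  Multiset.rel_refl_of_refl_on fun x _ => ⟨x, .refl x, .refl x⟩

theorem instRel_progresses (hp : Grd p) (hA : env A = subst (const A) p) (hB : RF (env B))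
    (h : Multiset.Rel (PlaceEq env) (dec noRes (subst (const B) p)) (dec noRes (env B))) :
    Progresses env (InstRel A B) (Relation.Comp (InstRel A B) (PlaceEq env)) := by
  intro x y hxy σ m hm
  cases hxy with
  | refl => exact ⟨m, hm, rel_instRel_comp_placeEq_refl m⟩
  | grd ht =>
    obtain ⟨t, ht', rfl, htr⟩ := ht.exists_tr_dec_subst ((ht.subst_const A).tr_dec_iff.2 hm)
    exact ⟨_, (ht.subst_const B).tr_dec_iff.1 (htr _), rel_instRel_comp_placeEq_dec_subst ht'⟩
  | var =>
    obtain ⟨t, ht, rfl, htr⟩ := hp.exists_tr_dec_subst (hA ▸ tr_const_iff.1 hm)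
    obtain ⟨n, hn, hr⟩ := isPlaceBisim_placeEq.forth.exists_tr (htr (const B)) h
      hB.unrestricted_dec
    exact ⟨n, tr_const_iff.2 hn, rel_comp (rel_instRel_dec_subst ht) hr⟩

theorem flip_instRel_progresses (hp : Grd p) (hA : env A = subst (const A) p)
    (h : Multiset.Rel (PlaceEq env) (dec noRes (subst (const B) p)) (dec noRes (env B))) :
    Progresses env (flip (InstRel A B)) (flip (Relation.Comp (InstRel A B) (PlaceEq env))) := by
  intro y x hxy σ n hn
  simp only [Multiset.rel_flip]
  cases hxy with
  | refl => exact ⟨n, hn, rel_instRel_comp_placeEq_refl n⟩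
  | grd ht =>
    obtain ⟨t, ht', rfl, htr⟩ := ht.exists_tr_dec_subst ((ht.subst_const B).tr_dec_iff.2 hn)
    exact ⟨_, (ht.subst_const A).tr_dec_iff.1 (htr _), rel_instRel_comp_placeEq_dec_subst ht'⟩
  | var =>
    obtain ⟨m, hm, hr⟩ := isPlaceBisim_placeEq.back.exists_tr (tr_const_iff.1 hn)
      (Multiset.rel_flip.2 h) (hp.subst_const B).rf.unrestricted_dec
    obtain ⟨t, ht, rfl, htr⟩ := hp.exists_tr_dec_subst hm
    exact ⟨_, tr_const_iff.2 (hA ▸ htr (const A)),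
      rel_comp (rel_instRel_dec_subst ht) (Multiset.rel_flip.1 hr)⟩

theorem isPlaceBisim_instRel_comp_placeEq (hp : Grd p) (hA : env A = subst (const A) p)
    (hB : RF (env B))
    (h : Multiset.Rel (PlaceEq env) (dec noRes (subst (const B) p)) (dec noRes (env B))) :
    IsPlaceBisim env (Relation.Comp (InstRel A B) (PlaceEq env)) where
  forth := ((instRel_progresses hp hA hB h).comp isPlaceBisim_placeEq.forth).mono
    (fun _ _ => id) fun _ _ ⟨_, ⟨w, hxw, hwz⟩, hzy⟩ => ⟨w, hxw, hwz.trans hzy⟩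
  back := (isPlaceBisim_placeEq.back.comp (flip_instRel_progresses hp hA h)).mono
    (fun _ _ ⟨w, hxw, hwy⟩ => ⟨w, hwy, hxw⟩)
    fun _ _ ⟨_, hzy, w, hxw, hwz⟩ => ⟨w, hxw, hwz.trans hzy⟩

end Recursion

end FNM

open FNM in
theorem speq_congr_recursion_general {α κ : Type} [DecidableEq α] [DecidableEq κ] [Fintype α]
    (env : κ → FNM α κ) (henv : ∀ c, RF (env c)) (p : FNM α κ) (hp : Grd p) (cA cB : κ)
    (hA : env cA = subst (const cA) p) (hB : SPEq env (subst (const cB) p) (env cB)) :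
    SPEq env (const cA) (const cB) := by
  have hrel := (speq_iff_rel_placeEq henv (hp.subst_const cB).rf (henv cB)).1 hB
  have hbisim := isPlaceBisim_instRel_comp_placeEq hp hA (henv cB) hrel
  have hAB : PlaceEq env (const cA, noRes) (const cB, noRes) :=
    ⟨_, hbisim, _, .var, .refl _⟩
  exact (speq_iff_rel_placeEq henv (rf_const cA) (rf_const cB)).2 (.cons hAB .zero)

open FNM in
/-- structure-preserving bisimilarity is a congruence for
guarded recursion: if `p` and `q` are open guarded FNM terms (with at most
the one variable `x`), the constants `A, B` are defined by `A ≐ p{A/x}` and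
`B ≐ q{B/x}`, and `p{r/x} ~sp q{r/x}` for every closed FNM sequential term
`r`, then `A ~sp B`. -/
theorem speq_congr_recursion {α κ : Type} [DecidableEq α] [DecidableEq κ]
    [Fintype α] [Finite κ]
    (env : κ → FNM α κ) (henv : ∀ c, Grd (env c) ∧ VarFree (env c))
    (p q : FNM α κ) (hp : Grd p) (hq : Grd q)
    (cA cB : κ)
    (hA : env cA = subst (FNM.const cA) p)
    (hB : env cB = subst (FNM.const cB) q)
    (h : ∀ r : FNM α κ, Seq r → VarFree r →
      SPEq env (subst r p) (subst r q)) :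
    SPEq env (FNM.const cA) (FNM.const cB) :=
  speq_congr_recursion_general env (fun c => (henv c).1.rf) p hp cA cB hA
    (hB ▸ h (const cB) (.inr (.inl ⟨cB, rfl⟩)) trivial)
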